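/- Let θ ∈ W be an involution; let n_s be the number of indices i with θ(eᵢ) = eᵢ, n_r the number of indices with θ(eᵢ) = −eᵢ, and 2k the number of indices with θ(eᵢ) ≠ ±eᵢ. Then the subgroup of W generated by the reflections s_α for imaginary roots α (those with θα = α) is isomorphic as an abstract group to ((Fin n_s → ZMod 2) ⋊ Perm(Fin n_s)) × (Fin k → ZMod 2), i.e. to W(B_{n_s}) × W(A₁)^k; and the subgroup generated by the reflections s_α for real roots α (those with θα = −α) is isomorphic to ((Fin n_r → ZMod 2) ⋊ Perm(Fin n_r)) × (Fin k → ZMod 2), i.e. to W(B_{n_r}) × W(A₁)^k. -/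

import Mathlib

open scoped RealInnerProductSpace

noncomputable section

/-- Euclidean space `ℝⁿ`. -/
abbrev EucB (n : ℕ) := EuclideanSpace ℝ (Fin n)

/-- The `i`-th standard basis vector of `ℝⁿ`. -/
def eB (n : ℕ) (i : Fin n) : EucB n := EuclideanSpace.single i (1 : ℝ)

/-- The root system `Δ` of type `Bₙ`:
`{±eᵢ ± eⱼ : i < j} ∪ {±eᵢ}`. -/
def DeltaB (n : ℕ) : Set (EucB n) :=
  {v | (∃ i j : Fin n, i < j ∧
          (v = eB n i + eB n j ∨ v = eB n i - eB n j ∨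
           v = -eB n i + eB n j ∨ v = -eB n i - eB n j)) ∨
        ∃ i : Fin n, v = eB n i ∨ v = -eB n i}

/-- The positive system `Δ⁺ = {eᵢ ± eⱼ : i < j} ∪ {eᵢ}`. -/
def DeltaBpos (n : ℕ) : Set (EucB n) :=
  {v | (∃ i j : Fin n, i < j ∧ (v = eB n i + eB n j ∨ v = eB n i - eB n j)) ∨
        ∃ i : Fin n, v = eB n i}

/-- The coroot `α∨ = 2α/⟪α,α⟫`. -/
def corootB (n : ℕ) (α : EucB n) : EucB n := (2 / ⟪α, α⟫) • α

/-- The linear functional `x ↦ ⟪x, α∨⟫`. -/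
def corootForm (n : ℕ) (α : EucB n) : Module.Dual ℝ (EucB n) where
  toFun x := ⟪x, corootB n α⟫
  map_add' x y := inner_add_left _ _ _
  map_smul' c x := by simpa using real_inner_smul_left x (corootB n α) c

/-- The reflection `s_α(x) = x − ⟪x, α∨⟫ α` as a linear automorphism of `ℝⁿ`
(for `α` a root, the branch condition `⟪α, α∨⟫ = 2` holds). -/
def sReflB (n : ℕ) (α : EucB n) : EucB n ≃ₗ[ℝ] EucB n :=
  if h : corootForm n α α = 2 then Module.reflection h else LinearEquiv.refl ℝ (EucB n)

/-- The Weyl group `W(Bₙ)`, the subgroup of linear automorphisms of `ℝⁿ` generated by the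
reflections in the roots of `Δ`. -/
def WeylB (n : ℕ) : Subgroup (EucB n ≃ₗ[ℝ] EucB n) :=
  Subgroup.closure {g | ∃ α ∈ DeltaB n, g = sReflB n α}


end

open Multiplicative

/-- The permutation action of `Equiv.Perm (Fin m)` on `Multiplicative (Fin m → ZMod 2)`,
permuting coordinates; used to realize the hyperoctahedral group `W(B_m)` as
`(Fin m → ZMod 2) ⋊ Perm (Fin m)`. -/
def permAction (m : ℕ) :
    Equiv.Perm (Fin m) →* MulAut (Multiplicative (Fin m → ZMod 2)) where
  toFun σ :=
    { toFun := fun b => Multiplicative.ofAdd (fun i => Multiplicative.toAdd b (σ⁻¹ i))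
      invFun := fun b => Multiplicative.ofAdd (fun i => Multiplicative.toAdd b (σ i))
      left_inv := by
        intro b
        simp
      right_inv := by
        intro b
        simp
      map_mul' := by
        intro a b
        rfl }
  map_one' := by
    apply MulEquiv.ext
    intro b
    simp
  map_mul' := by
    intro σ τ
    apply MulEquiv.ext
    intro b
    simp [mul_inv_rev, Equiv.Perm.mul_apply]


/-!
Let `η` be an involution permuting `{±e₁, …, ±eₙ}`. Comparing the two expressions of an `η`-fixed
root as a sum of at most two orthogonal elements of `{±eᵢ}`, one sees that the fixed roots are the
type-`B` system on the basis vectors fixed by `η` together with the vectors `±(a + η a)`, where `a`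
runs over the `±eᵢ` with `η a ⟂ a`. One representative of each orbit of indices gives pairwise
orthogonal vectors `a + η a`, which are also orthogonal to the fixed basis vectors. So the
reflections of the two kinds commute, they generate `W(B_m)` and `(ℤ/2)^k` respectively, and the
two subgroups meet trivially because the second one fixes the basis vectors on which the first one
acts faithfully. Applied to `η = θ` this describes the imaginary roots; the real roots of `θ` are
the roots fixed by `η = -θ`.
-/

section CommutingFamilies

variable {ι G : Type*} [Group G]

/-- The homomorphism `ℤ/n → G` sending the generator to an element `g` with `g ^ n = 1`. -/
def zmodPowHom {n : ℕ} (g : G) (hg : g ^ n = 1) : Multiplicative (ZMod n) →* G :=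
  AddMonoidHom.toMultiplicativeLeft
    (ZMod.lift n ⟨zmultiplesHom _ (Additive.ofMul g), by simp [← ofMul_pow, hg]⟩)

lemma zmodPowHom_ofAdd_intCast {n : ℕ} (g : G) (hg : g ^ n = 1) (z : ℤ) :
    zmodPowHom g hg (ofAdd (z : ZMod n)) = g ^ z := by
  simp [zmodPowHom]

lemma commute_zmodPowHom {n : ℕ} {g h : G} (hg : g ^ n = 1) (hh : h ^ n = 1) (hgh : Commute g h)
    (x y : Multiplicative (ZMod n)) : Commute (zmodPowHom g hg x) (zmodPowHom h hh y) := by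
  obtain ⟨a, ha⟩ := ZMod.intCast_surjective (toAdd x)
  obtain ⟨b, hb⟩ := ZMod.intCast_surjective (toAdd y)
  rw [← ofAdd_toAdd x, ← ofAdd_toAdd y, ← ha, ← hb, zmodPowHom_ofAdd_intCast,
    zmodPowHom_ofAdd_intCast]
  exact (hgh.zpow_right b).zpow_left a

lemma closure_range_ofAdd_single [Finite ι] [DecidableEq ι] (n : ℕ) :
    Subgroup.closure (Set.range fun i : ι ↦ ofAdd (Pi.single i (1 : ZMod n))) = ⊤ := by
  have := Fintype.ofFinite ι
  refine eq_top_iff.2 fun c _ ↦ ?_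
  rw [← ofAdd_toAdd c, ← Finset.univ_sum_single (toAdd c), ofAdd_sum]
  refine Subgroup.prod_mem _ fun i _ ↦ ?_
  obtain ⟨z, hz⟩ := ZMod.intCast_surjective (toAdd c i)
  have hsingle : Pi.single i (toAdd c i) = z • Pi.single (M := fun _ : ι ↦ ZMod n) i 1 := by
    rw [← Pi.single_zsmul, zsmul_one, hz]
  rw [hsingle, ofAdd_zsmul]
  exact Subgroup.zpow_mem _ (Subgroup.subset_closure (Set.mem_range_self i)) z

variable [Fintype ι]

/-- The homomorphism `(ℤ/n)^ι → G`, `c ↦ ∏ᵢ (g i) ^ (c i)`, attached to a family of pairwise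
commuting elements with `(g i) ^ n = 1`. -/
def commutingPowHom {n : ℕ} (g : ι → G) (hg : ∀ i, g i ^ n = 1)
    (hcomm : Pairwise fun i j ↦ Commute (g i) (g j)) : Multiplicative (ι → ZMod n) →* G :=
  (MonoidHom.noncommPiCoprod (fun i ↦ zmodPowHom (g i) (hg i))
    (hcomm.mono fun _ _ hij ↦ commute_zmodPowHom _ _ hij)).comp
    (MulEquiv.funMultiplicative ι (ZMod n)).toMonoidHom

variable {n : ℕ} (g : ι → G) (hg : ∀ i, g i ^ n = 1)
  (hcomm : Pairwise fun i j ↦ Commute (g i) (g j))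

lemma commutingPowHom_ofAdd_single [DecidableEq ι] (i : ι) :
    commutingPowHom g hg hcomm (ofAdd (Pi.single i 1)) = g i := by
  have hsingle : MulEquiv.funMultiplicative ι (ZMod n) (ofAdd (Pi.single i 1)) =
      Pi.mulSingle i (ofAdd 1) := by
    ext j
    rcases eq_or_ne j i with rfl | hji <;> simp [*]
  have hone : zmodPowHom (g i) (hg i) (ofAdd 1) = g i := by
    simpa using zmodPowHom_ofAdd_intCast (g i) (hg i) 1
  simpa [commutingPowHom, hsingle] using hone

lemma range_commutingPowHom :
    (commutingPowHom g hg hcomm).range = Subgroup.closure (Set.range g) := by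
  classical
  rw [MonoidHom.range_eq_map, ← closure_range_ofAdd_single, MonoidHom.map_closure,
    ← Set.range_comp]
  congr 2
  exact funext (commutingPowHom_ofAdd_single g hg hcomm)

end CommutingFamilies

section GroupTheory

variable {A B G : Type*} [Group A] [Group B] [Group G]

lemma commute_of_mem_closure {S T : Set G} (hST : ∀ s ∈ S, ∀ t ∈ T, Commute s t) {x y : G}
    (hx : x ∈ Subgroup.closure S) (hy : y ∈ Subgroup.closure T) : Commute x y := by
  have hS : Subgroup.closure S ≤ Subgroup.centralizer (Subgroup.closure T) := by
    rw [Subgroup.centralizer_closure, Subgroup.closure_le]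
    exact fun s hs t ht ↦ (hST s hs t ht).symm
  exact (hS hx y hy).symm

lemma nonempty_closure_union_mulEquiv_prod {S T : Set G} (φ : A →* G) (ψ : B →* G)
    (hφ : Function.Injective φ) (hψ : Function.Injective ψ)
    (hφS : φ.range = Subgroup.closure S) (hψT : ψ.range = Subgroup.closure T)
    (hST : ∀ s ∈ S, ∀ t ∈ T, Commute s t) (hdisj : Disjoint φ.range ψ.range) :
    Nonempty (Subgroup.closure (S ∪ T) ≃* A × B) := by
  have hcomm (a : A) (b : B) : Commute (φ a) (ψ b) :=
    commute_of_mem_closure hST (hφS ▸ ⟨a, rfl⟩) (hψT ▸ ⟨b, rfl⟩)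
  have hinj : Function.Injective (φ.noncommCoprod ψ hcomm) :=
    (MonoidHom.noncommCoprod_injective φ ψ hcomm).2 ⟨hφ, hψ, hdisj⟩
  have hrange : (φ.noncommCoprod ψ hcomm).range = Subgroup.closure (S ∪ T) := by
    rw [MonoidHom.noncommCoprod_range, hφS, hψT, Subgroup.closure_union]
  exact ⟨(hrange ▸ MonoidHom.ofInjective hinj).symm⟩

lemma range_semidirectProduct_lift {θ : B →* MulAut A} (φ : A →* G) (ψ : B →* G)
    (h : ∀ b, φ.comp (θ b).toMonoidHom = (MulAut.conj (ψ b)).toMonoidHom.comp φ) :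
    (SemidirectProduct.lift φ ψ h).range = φ.range ⊔ ψ.range := by
  refine le_antisymm ?_ (sup_le ?_ ?_)
  · rintro _ ⟨x, rfl⟩
    exact Subgroup.mul_mem_sup ⟨x.left, rfl⟩ ⟨x.right, rfl⟩
  · rintro _ ⟨a, rfl⟩
    exact ⟨.inl a, SemidirectProduct.lift_inl ..⟩
  · rintro _ ⟨b, rfl⟩
    exact ⟨.inr b, SemidirectProduct.lift_inr ..⟩

end GroupTheory

lemma exists_bijective_sumElim_of_involutive {X : Type*} [Finite X] {τ : X → X}
    (hτ : Function.Involutive τ) (hfix : ∀ x, τ x ≠ x) {k : ℕ} (hk : Nat.card X = 2 * k) :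
    ∃ r : Fin k → X, Function.Bijective (Sum.elim r (τ ∘ r)) := by
  -- Any linear order on `X` selects the smaller element of each orbit.
  obtain ⟨_, -⟩ := exists_wellFoundedLT X
  let low : {x // x < τ x} → X := Subtype.val
  have hbij : Function.Bijective (Sum.elim low (τ ∘ low)) := by
    refine ⟨Function.Injective.sumElim Subtype.val_injective
      (hτ.injective.comp Subtype.val_injective) ?_, fun x ↦ ?_⟩
    · rintro ⟨x, hx⟩ ⟨y, hy⟩ (rfl : x = τ y)
      rw [hτ] at hx
      exact lt_asymm hx hy
    · rcases (hfix x).lt_or_gt with h | h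
      · exact ⟨.inr ⟨τ x, by rwa [hτ]⟩, hτ x⟩
      · exact ⟨.inl ⟨x, h⟩, rfl⟩
  have hcard : Nat.card {x // x < τ x} = k := by
    have := Nat.card_eq_of_bijective _ hbij
    rw [Nat.card_sum] at this
    lia
  let e := (Finite.equivFinOfCardEq hcard).symm
  refine ⟨low ∘ e, ?_⟩
  convert hbij.comp (Equiv.sumCongr e e).bijective using 1
  ext (p | p) <;> rfl

section TypeBRoots

variable {ι E : Type*} [NormedAddCommGroup E]

/-- The set `{±vᵢ}` of the vectors of a family and their negatives. -/
def signedRange (v : ι → E) : Set E := {x | ∃ i, x = v i ∨ x = -v i}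

lemma mem_signedRange (v : ι → E) (i : ι) : v i ∈ signedRange v := ⟨i, .inl rfl⟩

lemma neg_mem_signedRange {v : ι → E} {a : E} (ha : a ∈ signedRange v) : -a ∈ signedRange v := by
  obtain ⟨i, rfl | rfl⟩ := ha
  exacts [⟨i, .inr rfl⟩, ⟨i, .inl (neg_neg _)⟩]

variable [InnerProductSpace ℝ E]

/-- The root system `{±vᵢ ± vⱼ : i ≠ j} ∪ {±vᵢ}` of type `B` on an orthonormal family `v`. The
long roots are encoded as the sums of two orthogonal elements of `{±vᵢ}`. -/
def typeBRoots (v : ι → E) : Set E :=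
  signedRange v ∪ {x | ∃ a ∈ signedRange v, ∃ b ∈ signedRange v, ⟪a, b⟫ = 0 ∧ x = a + b}

lemma inner_eq_zero_of_mem_typeBRoots {v : ι → E} {α x : E} (hα : α ∈ typeBRoots v)
    (hx : ∀ i, ⟪v i, x⟫ = 0) : ⟪α, x⟫ = 0 := by
  have hshort {a : E} (ha : a ∈ signedRange v) : ⟪a, x⟫ = 0 := by
    obtain ⟨i, rfl | rfl⟩ := ha <;> simp [hx]
  obtain hα | ⟨a, ha, b, hb, -, rfl⟩ := hα
  · exact hshort hα
  · rw [inner_add_left, hshort ha, hshort hb, add_zero]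

variable {v : ι → E} (hv : Orthonormal ℝ v)
include hv

lemma inner_self_of_mem_signedRange {a : E} (ha : a ∈ signedRange v) : ⟪a, a⟫ = 1 := by
  obtain ⟨i, rfl | rfl⟩ := ha <;> simp [hv.1 i]

lemma eq_or_eq_neg_or_inner_eq_zero {a b : E} (ha : a ∈ signedRange v) (hb : b ∈ signedRange v) :
    a = b ∨ a = -b ∨ ⟪a, b⟫ = 0 := by
  obtain ⟨i, hi⟩ := ha
  obtain ⟨j, hj⟩ := hb
  rcases eq_or_ne i j with rfl | hij
  · rcases hi with rfl | rfl <;> rcases hj with rfl | rfl <;> simp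
  · rcases hi with rfl | rfl <;> rcases hj with rfl | rfl <;> simp [hv.2 hij]

lemma inner_eq_zero_iff_of_mem_signedRange {a b : E} (ha : a ∈ signedRange v)
    (hb : b ∈ signedRange v) : ⟪a, b⟫ = 0 ↔ a ≠ b ∧ a ≠ -b := by
  have hone := inner_self_of_mem_signedRange hv hb
  refine ⟨fun h ↦ ⟨?_, ?_⟩, fun h ↦ ?_⟩
  · rintro rfl
    linarith
  · rintro rfl
    rw [inner_neg_left] at h
    linarith
  · exact ((eq_or_eq_neg_or_inner_eq_zero hv ha hb).resolve_left h.1).resolve_left h.2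

lemma mem_typeBRoots_iff {x : E} :
    x ∈ typeBRoots v ↔
      (∃ i j, i ≠ j ∧ (x = v i + v j ∨ x = v i - v j ∨ x = -v i + v j ∨ x = -v i - v j)) ∨
        ∃ i, x = v i ∨ x = -v i := by
  rw [or_comm]
  refine or_congr_right ⟨?_, ?_⟩
  · rintro ⟨a, ⟨i, hi⟩, b, ⟨j, hj⟩, hab, rfl⟩
    refine ⟨i, j, ?_, ?_⟩
    · rintro rfl
      rcases hi with rfl | rfl <;> rcases hj with rfl | rfl <;> simp [hv.1] at hab
    · rcases hi with rfl | rfl <;> rcases hj with rfl | rfl <;> simp [sub_eq_add_neg]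
  · rintro ⟨i, j, hij, h⟩
    have hortho : ⟪v i, v j⟫ = 0 := hv.2 hij
    rcases h with rfl | rfl | rfl | rfl
    · exact ⟨v i, ⟨i, .inl rfl⟩, v j, ⟨j, .inl rfl⟩, hortho, rfl⟩
    · exact ⟨v i, ⟨i, .inl rfl⟩, -v j, ⟨j, .inr rfl⟩, by simpa, sub_eq_add_neg _ _⟩
    · exact ⟨-v i, ⟨i, .inr rfl⟩, v j, ⟨j, .inl rfl⟩, by simpa, rfl⟩
    · exact ⟨-v i, ⟨i, .inr rfl⟩, -v j, ⟨j, .inr rfl⟩, by simpa, sub_eq_add_neg _ _⟩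

lemma eq_or_inner_nonpos {a b : E} (ha : a ∈ signedRange v) (hb : b ∈ signedRange v) :
    a = b ∨ ⟪a, b⟫ ≤ 0 := by
  refine (eq_or_eq_neg_or_inner_eq_zero hv ha hb).imp_right ?_
  rintro (rfl | hab)
  · rw [inner_neg_left]
    exact neg_nonpos.2 real_inner_self_nonneg
  · exact hab.le

lemma index_eq_of_eq_or_eq_neg {i j : ι} (h : v i = v j ∨ v i = -v j) : i = j := by
  by_contra hij
  have hortho : ⟪v i, v j⟫ = 0 := hv.2 hij
  rcases h with h | h <;> simp [h, hv.1 j] at hortho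

-- Pairing `a + b = c + d` with `a` gives `⟪a, c⟫ + ⟪a, d⟫ = 1`, so that `a = c` or `a = d`.
lemma eq_and_eq_or_eq_and_eq_of_add_eq_add {a b c d : E} (ha : a ∈ signedRange v)
    (hc : c ∈ signedRange v) (hd : d ∈ signedRange v) (hab : ⟪a, b⟫ = 0) (h : a + b = c + d) :
    (a = c ∧ b = d) ∨ (a = d ∧ b = c) := by
  have hsum : ⟪a, c⟫ + ⟪a, d⟫ = 1 := by
    rw [← inner_add_right, ← h, inner_add_right, inner_self_of_mem_signedRange hv ha, hab,
      add_zero]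
  rcases eq_or_inner_nonpos hv ha hc with rfl | hac
  · exact .inl ⟨rfl, add_left_cancel h⟩
  rcases eq_or_inner_nonpos hv ha hd with rfl | had
  · exact .inr ⟨rfl, add_left_cancel (h.trans (add_comm c a))⟩
  · linarith

end TypeBRoots

section SignedInvolutions

variable {ι κ E : Type*} [NormedAddCommGroup E] [InnerProductSpace ℝ E]

/-- An involution of `E` permuting the set `{±vᵢ}`. -/
structure IsSignedInvolution (v : ι → E) (η : E →ₗ[ℝ] E) : Prop where
  involutive : Function.Involutive η
  mapsTo : Set.MapsTo η (signedRange v) (signedRange v)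

namespace IsSignedInvolution

variable {v : ι → E} {η : E →ₗ[ℝ] E} (hη : IsSignedInvolution v η)
include hη

lemma neg : IsSignedInvolution v (-η) where
  involutive x := by simp [hη.involutive x]
  mapsTo _ ha := neg_mem_signedRange (hη.mapsTo ha)

variable (hv : Orthonormal ℝ v)
include hv

lemma inner_map_map {a b : E} (ha : a ∈ signedRange v) (hb : b ∈ signedRange v) :
    ⟪η a, η b⟫ = ⟪a, b⟫ := by
  have hself {a : E} (ha : a ∈ signedRange v) : ⟪η a, η a⟫ = ⟪a, a⟫ := by
    rw [inner_self_of_mem_signedRange hv ha, inner_self_of_mem_signedRange hv (hη.mapsTo ha)]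
  rcases eq_or_eq_neg_or_inner_eq_zero hv ha hb with rfl | rfl | hab
  · exact hself ha
  · rw [map_neg, inner_neg_left, inner_neg_left, hself hb]
  · obtain ⟨hne, hne'⟩ := (inner_eq_zero_iff_of_mem_signedRange hv ha hb).1 hab
    rw [hab, inner_eq_zero_iff_of_mem_signedRange hv (hη.mapsTo ha) (hη.mapsTo hb), ← map_neg]
    exact ⟨hη.involutive.injective.ne hne, hη.involutive.injective.ne hne'⟩

lemma inner_map_left {a b : E} (ha : a ∈ signedRange v) (hb : b ∈ signedRange v) :
    ⟪η a, b⟫ = ⟪a, η b⟫ := by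
  rw [← hη.inner_map_map hv ha (hη.mapsTo hb), hη.involutive]

lemma inner_add_map_eq_zero {a b : E} (ha : a ∈ signedRange v) (hb : b ∈ signedRange v)
    (hηa : η a = a) (hηb : ⟪η b, b⟫ = 0) : ⟪a, b + η b⟫ = 0 := by
  have hab : ⟪a, b⟫ = 0 := by
    rw [inner_eq_zero_iff_of_mem_signedRange hv ha hb]
    have hself := inner_self_of_mem_signedRange hv ha
    constructor <;> rintro rfl <;> simp_all
  rw [inner_add_right, ← hη.inner_map_left hv ha hb, hηa, hab, add_zero]

lemma setOf_mem_typeBRoots_map_eq_self (f : κ → ι) (hf : ∀ i, η (v i) = v i ↔ i ∈ Set.range f) :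
    {α | α ∈ typeBRoots v ∧ η α = α} = typeBRoots (v ∘ f) ∪
      {x | ∃ a ∈ signedRange v, ⟪η a, a⟫ = 0 ∧ x = a + η a} := by
  have hfix {a : E} : a ∈ signedRange (v ∘ f) ↔ a ∈ signedRange v ∧ η a = a := by
    constructor
    · rintro ⟨p, hp⟩
      have := (hf (f p)).2 ⟨p, rfl⟩
      exact ⟨⟨f p, hp⟩, by rcases hp with rfl | rfl <;> simp [this]⟩
    · rintro ⟨⟨i, hi⟩, ha⟩
      obtain ⟨p, rfl⟩ := (hf i).1 (by rcases hi with rfl | rfl <;> simpa using ha)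
      exact ⟨p, hi⟩
  ext α
  constructor
  · rintro ⟨hα | ⟨a, ha, b, hb, hab, rfl⟩, hfixα⟩
    · exact .inl (.inl (hfix.2 ⟨hα, hfixα⟩))
    · rw [map_add] at hfixα
      rcases eq_and_eq_or_eq_and_eq_of_add_eq_add hv ha (hη.mapsTo ha) (hη.mapsTo hb) hab
        hfixα.symm with ⟨ha', hb'⟩ | ⟨-, rfl⟩
      · exact .inl (.inr ⟨a, hfix.2 ⟨ha, ha'.symm⟩, b, hfix.2 ⟨hb, hb'.symm⟩, hab, rfl⟩)
      · exact .inr ⟨a, ha, by rwa [real_inner_comm], rfl⟩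
  · rintro ((hα | ⟨a, ha, b, hb, hab, rfl⟩) | ⟨a, ha, hab, rfl⟩)
    · exact ⟨.inl (hfix.1 hα).1, (hfix.1 hα).2⟩
    · rw [hfix] at ha hb
      exact ⟨.inr ⟨a, ha.1, b, hb.1, hab, rfl⟩, by rw [map_add, ha.2, hb.2]⟩
    · exact ⟨.inr ⟨a, ha, η a, hη.mapsTo ha, by rwa [real_inner_comm], rfl⟩,
        by rw [map_add, hη.involutive, add_comm]⟩

lemma exists_involutive_of_inner_map_self_eq_zero :
    ∃ τ : {i // ⟪η (v i), v i⟫ = 0} → {i // ⟪η (v i), v i⟫ = 0}, Function.Involutive τ ∧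
      (∀ i, τ i ≠ i) ∧ ∀ i : {i // ⟪η (v i), v i⟫ = 0}, η (v i) = v (τ i) ∨ η (v i) = -v (τ i) := by
  choose τ hτ using fun i ↦ hη.mapsTo (mem_signedRange v i)
  have hτ_symm (i : ι) : v i = η (v (τ i)) ∨ v i = -η (v (τ i)) := by
    have := hη.involutive (v i)
    rcases hτ i with h | h <;> simp_all
  have hτ_inv : Function.Involutive τ := by
    refine fun i ↦ (index_eq_of_eq_or_eq_neg hv ?_).symm
    rcases hτ_symm i with h | h <;> rcases hτ (τ i) with h' | h' <;> simp [h, h']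
  have hτ_mem (i : ι) (hi : ⟪η (v i), v i⟫ = 0) : ⟪η (v (τ i)), v (τ i)⟫ = 0 := by
    rw [real_inner_comm] at hi
    rcases hτ i with h | h
    · rwa [← h, hη.involutive]
    · rwa [← neg_eq_iff_eq_neg.2 h, map_neg, hη.involutive, inner_neg_neg]
  refine ⟨fun i ↦ ⟨τ i, hτ_mem i i.2⟩, fun i ↦ Subtype.ext (hτ_inv i), ?_, fun i ↦ hτ i⟩
  rintro ⟨i, hi⟩ hτi
  have hτi : τ i = i := congrArg Subtype.val hτi
  rcases hτi ▸ hτ i with h | h <;> simp [h, hv.1 i] at hi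

lemma exists_orbit_representatives [Finite ι] {k : ℕ}
    (hk : Nat.card {i // ⟪η (v i), v i⟫ = 0} = 2 * k) :
    ∃ r : Fin k → ι, (∀ p, ⟪η (v (r p)), v (r p)⟫ = 0) ∧
      (Pairwise fun p q ↦ ⟪v (r p), v (r q)⟫ = 0 ∧ ⟪v (r p), η (v (r q))⟫ = 0) ∧
      ∀ a ∈ signedRange v, ⟪η a, a⟫ = 0 → a ∈ signedRange (v ∘ r) ∨ η a ∈ signedRange (v ∘ r) := by
  obtain ⟨τ, hτ, hτ_ne, hητ⟩ := hη.exists_involutive_of_inner_map_self_eq_zero hv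
  obtain ⟨r, hr⟩ := exists_bijective_sumElim_of_involutive hτ hτ_ne hk
  refine ⟨fun p ↦ r p, fun p ↦ (r p).2, fun p q hpq ↦ ⟨?_, ?_⟩, ?_⟩
  · exact hv.2 fun h ↦ hpq (Sum.inl_injective (hr.1 (Subtype.ext h)))
  · have hvv : ⟪v (r p), v (τ (r q))⟫ = 0 :=
      hv.2 fun h ↦ Sum.inl_ne_inr (hr.1 (a₁ := .inl p) (a₂ := .inr q) (Subtype.ext h))
    rcases hητ (r q) with h | h <;> simp [h, hvv]
  · rintro a ⟨i, ha⟩ hai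
    have hi : ⟪η (v i), v i⟫ = 0 := by rcases ha with rfl | rfl <;> simpa using hai
    obtain ⟨p | p, hp⟩ := hr.2 ⟨i, hi⟩
    · obtain rfl : (r p : ι) = i := congrArg Subtype.val hp
      exact .inl ⟨p, ha⟩
    · obtain rfl : (τ (r p) : ι) = i := congrArg Subtype.val hp
      have hrp := hητ (τ (r p))
      rw [hτ] at hrp
      refine .inr ⟨p, ?_⟩
      rcases ha with rfl | rfl <;> rcases hrp with h | h <;> simp [h]

lemma exists_signedRange_eq [Finite ι] {k : ℕ}
    (hk : Nat.card {i // ⟪η (v i), v i⟫ = 0} = 2 * k) :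
    ∃ β : Fin k → E, (∀ p, β p ≠ 0) ∧ (Pairwise fun p q ↦ ⟪β p, β q⟫ = 0) ∧
      signedRange β = {x | ∃ a ∈ signedRange v, ⟪η a, a⟫ = 0 ∧ x = a + η a} := by
  obtain ⟨r, hr, hortho, hcover⟩ := hη.exists_orbit_representatives hv hk
  have hmem := mem_signedRange v
  let β (p : Fin k) : E := v (r p) + η (v (r p))
  have hβ_mem {a : E} : a ∈ signedRange (v ∘ r) → a + η a ∈ signedRange β := by
    rintro ⟨p, rfl | rfl⟩
    · exact ⟨p, .inl rfl⟩
    · exact ⟨p, .inr (by rw [map_neg, ← neg_add]; rfl)⟩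
  refine ⟨β, fun p hp ↦ ?_, fun p q hpq ↦ ?_, subset_antisymm ?_ ?_⟩
  · have hinner : ⟪β p, v (r p)⟫ = 1 := by simp [β, inner_add_left, hr, hv.1]
    simp [hp] at hinner
  · simp only [β, inner_add_left, inner_add_right, hη.inner_map_map hv (hmem _) (hmem _),
      hη.inner_map_left hv (hmem _) (hmem _), hortho hpq, add_zero]
  · rintro x ⟨p, rfl | rfl⟩
    · exact ⟨v (r p), hmem _, hr p, rfl⟩
    · exact ⟨-v (r p), neg_mem_signedRange (hmem _), by simpa using hr p, by
        rw [map_neg, ← neg_add]⟩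
  · rintro _ ⟨a, ha, hai, rfl⟩
    rcases hcover a ha hai with h | h
    · exact hβ_mem h
    · simpa only [hη.involutive a, add_comm a] using hβ_mem h

end IsSignedInvolution

end SignedInvolutions

section Reflections

variable {n : ℕ}

lemma sReflB_apply (α x : EucB n) : sReflB n α x = x - (2 * ⟪α, x⟫ / ⟪α, α⟫) • α := by
  rcases eq_or_ne α 0 with rfl | hα
  · simp [sReflB, corootForm]
  · have hform (y : EucB n) : corootForm n α y = 2 * ⟪α, y⟫ / ⟪α, α⟫ := by
      simp only [corootForm, corootB, LinearMap.coe_mk, AddHom.coe_mk, real_inner_smul_right,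
        real_inner_comm α y]
      ring
    have hcoroot : corootForm n α α = 2 := by
      rw [hform, mul_div_cancel_right₀ _ (inner_self_ne_zero.2 hα)]
    rw [sReflB, dif_pos hcoroot, Module.reflection_apply, hform]

lemma sReflB_eq_reflection (α : EucB n) : sReflB n α = (ℝ ∙ α)ᗮ.reflection.toLinearEquiv := by
  ext1 x
  rw [sReflB_apply, LinearIsometryEquiv.coe_toLinearEquiv, Submodule.reflection_orthogonal_apply,
    Submodule.reflection_singleton_apply, neg_sub, two_nsmul, ← add_smul, ← two_mul, mul_div_assoc,
    real_inner_self_eq_norm_sq]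
  rfl

lemma sReflB_neg (α : EucB n) : sReflB n (-α) = sReflB n α := by
  ext1 x
  rw [sReflB_apply, sReflB_apply, inner_neg_neg, inner_neg_left, mul_neg, neg_div, neg_smul_neg]

lemma sReflB_self (α : EucB n) : sReflB n α α = -α := by
  rw [sReflB_eq_reflection]
  exact Submodule.reflection_orthogonalComplement_singleton_eq_neg α

lemma sReflB_apply_of_inner_eq_zero {α x : EucB n} (h : ⟪α, x⟫ = 0) : sReflB n α x = x := by
  simp [sReflB_apply, h]

lemma sReflB_sub {a b : EucB n} (h : ‖a‖ = ‖b‖) : sReflB n (a - b) a = b := by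
  rw [sReflB_eq_reflection]
  exact Submodule.reflection_sub h

lemma sReflB_sq (α : EucB n) : sReflB n α ^ 2 = 1 := by
  ext1 x
  simp [sReflB_eq_reflection, sq]

lemma conj_sReflB (g : EucB n ≃ₗᵢ[ℝ] EucB n) (α : EucB n) :
    MulAut.conj g.toLinearEquiv (sReflB n α) = sReflB n (g α) := by
  ext1 x
  have hinner : ⟪α, g.symm x⟫ = ⟪g α, x⟫ := (g.inner_map_eq_flip α x).symm
  change g (sReflB n α (g.symm x)) = _
  simp only [sReflB_apply, map_sub, map_smul, g.apply_symm_apply, g.inner_map_map, hinner]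

lemma conj_sReflB_sReflB (α β : EucB n) :
    MulAut.conj (sReflB n α) (sReflB n β) = sReflB n (sReflB n α β) := by
  simpa only [← sReflB_eq_reflection, ← LinearIsometryEquiv.coe_toLinearEquiv] using
    conj_sReflB (ℝ ∙ α)ᗮ.reflection β

lemma commute_sReflB {α β : EucB n} (h : ⟪α, β⟫ = 0) : Commute (sReflB n α) (sReflB n β) := by
  have hconj := conj_sReflB_sReflB α β
  rw [sReflB_apply_of_inner_eq_zero h] at hconj
  exact mul_inv_eq_iff_eq_mul.1 hconj

section ReflHom

variable {ι : Type*} [Fintype ι] {v : ι → EucB n} (hv : Pairwise fun i j ↦ ⟪v i, v j⟫ = 0)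

/-- The homomorphism `(ℤ/2)^ι → GL(ℝⁿ)` attached to a family of pairwise orthogonal vectors, sending
the `i`-th generator to the reflection in the `i`-th vector. -/
noncomputable def reflHom : Multiplicative (ι → ZMod 2) →* (EucB n ≃ₗ[ℝ] EucB n) :=
  commutingPowHom (fun i ↦ sReflB n (v i)) (fun i ↦ sReflB_sq (v i))
    (hv.mono fun _ _ ↦ commute_sReflB)

lemma reflHom_ofAdd_single [DecidableEq ι] (i : ι) :
    reflHom hv (ofAdd (Pi.single i 1)) = sReflB n (v i) :=
  commutingPowHom_ofAdd_single ..

lemma range_reflHom : (reflHom hv).range = Subgroup.closure (Set.range fun i ↦ sReflB n (v i)) :=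
  range_commutingPowHom ..

lemma reflHom_apply_of_inner_eq_zero {x : EucB n} (hx : ∀ i, ⟪v i, x⟫ = 0)
    (c : Multiplicative (ι → ZMod 2)) : reflHom hv c x = x := by
  have hle : (reflHom hv).range ≤ MulAction.stabilizer (EucB n ≃ₗ[ℝ] EucB n) x := by
    rw [range_reflHom, Subgroup.closure_le]
    rintro _ ⟨i, rfl⟩
    exact sReflB_apply_of_inner_eq_zero (hx i)
  exact hle ⟨c, rfl⟩

lemma reflHom_apply_self (c : Multiplicative (ι → ZMod 2)) (i : ι) :
    reflHom hv c (v i) = (-1 : ℤˣ) ^ toAdd c i • v i := by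
  classical
  have hc : c ∈ Subgroup.closure (Set.range fun j : ι ↦ ofAdd (Pi.single j (1 : ZMod 2))) := by
    rw [closure_range_ofAdd_single]
    trivial
  induction hc using Subgroup.closure_induction with
  | mem _ hj =>
    obtain ⟨j, rfl⟩ := hj
    rw [reflHom_ofAdd_single]
    rcases eq_or_ne j i with rfl | hji
    · simp [sReflB_self]
    · simp [sReflB_apply_of_inner_eq_zero (hv hji), hji]
  | one => simp
  | mul c d _ _ hc hd =>
    rw [map_mul, LinearEquiv.mul_apply, hd, Units.smul_def, map_zsmul, ← Units.smul_def, hc,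
      ← mul_smul, ← uzpow_add, add_comm]
    rfl
  | inv c _ hc => rwa [show c⁻¹ = c from toAdd.injective (ZModModule.neg_eq_self _)]

lemma eq_one_of_reflHom_apply_self (hv0 : ∀ i, v i ≠ 0) {c : Multiplicative (ι → ZMod 2)}
    (hc : ∀ i, reflHom hv c (v i) = v i) : c = 1 := by
  refine toAdd.injective (funext fun i ↦ ?_)
  have : IsAddTorsionFree (EucB n) := .of_module_rat _
  have hi := (reflHom_apply_self hv c i).symm.trans (hc i)
  obtain h | h : toAdd c i = 0 ∨ toAdd c i = 1 := Fin.exists_fin_two.1 ⟨_, rfl⟩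
  · exact h
  · rw [h, uzpow_one, Units.neg_smul, one_smul, neg_eq_self] at hi
    exact absurd hi (hv0 i)

lemma reflHom_injective (hv0 : ∀ i, v i ≠ 0) : Function.Injective (reflHom hv) :=
  (injective_iff_map_eq_one _).2 fun _ hc ↦ eq_one_of_reflHom_apply_self hv hv0 (by simp [hc])

end ReflHom

end Reflections

section TypeB

variable {n : ℕ}

lemma orthonormal_eB (n : ℕ) : Orthonormal ℝ (eB n) := EuclideanSpace.orthonormal_single

lemma linearEquiv_ext_eB {g h : EucB n ≃ₗ[ℝ] EucB n} (H : ∀ i, g (eB n i) = h (eB n i)) : g = h :=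
  (EuclideanSpace.basisFun (Fin n) ℝ).toBasis.ext' fun i ↦ by simpa [eB] using H i

/-- The action of the symmetric group on `ℝⁿ` by permutation of the basis vectors. -/
noncomputable def permHom (n : ℕ) : Equiv.Perm (Fin n) →* (EucB n ≃ₗ[ℝ] EucB n) where
  toFun σ := (LinearIsometryEquiv.piLpCongrLeft 2 ℝ ℝ σ).toLinearEquiv
  map_one' := rfl
  map_mul' _ _ := linearEquiv_ext_eB fun _ ↦ by
    simp [eB, LinearEquiv.mul_apply]

lemma permHom_apply_eB (σ : Equiv.Perm (Fin n)) (i : Fin n) :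
    permHom n σ (eB n i) = eB n (σ i) :=
  EuclideanSpace.piLpCongrLeft_single ..

lemma conj_permHom_sReflB_eB (σ : Equiv.Perm (Fin n)) (i : Fin n) :
    MulAut.conj (permHom n σ) (sReflB n (eB n i)) = sReflB n (eB n (σ i)) := by
  rw [← permHom_apply_eB]
  exact conj_sReflB (LinearIsometryEquiv.piLpCongrLeft 2 ℝ ℝ σ) (eB n i)

lemma permHom_swap {i j : Fin n} (hij : i ≠ j) :
    permHom n (Equiv.swap i j) = sReflB n (eB n i - eB n j) := by
  have hnorm : ‖eB n i‖ = ‖eB n j‖ := by rw [(orthonormal_eB n).1, (orthonormal_eB n).1]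
  refine linearEquiv_ext_eB fun l ↦ ?_
  rw [permHom_apply_eB]
  rcases eq_or_ne l i with rfl | hli
  · rw [Equiv.swap_apply_left, sReflB_sub hnorm]
  rcases eq_or_ne l j with rfl | hlj
  · rw [Equiv.swap_apply_right, ← neg_sub, sReflB_neg, sReflB_sub hnorm.symm]
  · have hinner : ⟪eB n i - eB n j, eB n l⟫ = 0 := by
      rw [inner_sub_left, (orthonormal_eB n).2 hli.symm, (orthonormal_eB n).2 hlj.symm, sub_zero]
    rw [Equiv.swap_apply_of_ne_of_ne hli hlj, sReflB_apply_of_inner_eq_zero hinner]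

lemma DeltaB_eq_typeBRoots (n : ℕ) : DeltaB n = typeBRoots (eB n) := by
  ext x
  rw [mem_typeBRoots_iff (orthonormal_eB n)]
  refine or_congr_left ⟨fun ⟨i, j, hij, h⟩ ↦ ⟨i, j, hij.ne, h⟩, fun ⟨i, j, hij, h⟩ ↦ ?_⟩
  rcases hij.lt_or_gt with hij | hji
  · exact ⟨i, j, hij, h⟩
  · refine ⟨j, i, hji, ?_⟩
    rcases h with rfl | rfl | rfl | rfl <;> simp [sub_eq_add_neg, add_comm]

lemma permAction_ofAdd_single {m : ℕ} (σ : Equiv.Perm (Fin m)) (i : Fin m) :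
    permAction m σ (ofAdd (Pi.single i 1)) = ofAdd (Pi.single (σ i) 1) := by
  refine toAdd.injective (funext fun j ↦ ?_)
  simp [permAction, Pi.single_apply, Equiv.symm_apply_eq]

lemma viaEmbeddingHom_swap {α β : Type*} [DecidableEq α] [DecidableEq β] (f : α ↪ β) (i j : α) :
    Equiv.Perm.viaEmbeddingHom f (Equiv.swap i j) = Equiv.swap (f i) (f j) := by
  ext x
  rw [Equiv.Perm.viaEmbeddingHom_apply]
  by_cases hx : x ∈ Set.range f
  · obtain ⟨y, rfl⟩ := hx
    rw [Equiv.Perm.viaEmbedding_apply, f.swap_apply]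
  · rw [Equiv.Perm.viaEmbedding_apply_of_notMem _ _ _ hx, Equiv.swap_apply_of_ne_of_ne]
    exacts [fun h ↦ hx ⟨i, h.symm⟩, fun h ↦ hx ⟨j, h.symm⟩]

section TypeBHom

variable {m : ℕ} (f : Fin m ↪ Fin n)

lemma orthonormal_eB_comp : Orthonormal ℝ (eB n ∘ f) := (orthonormal_eB n).comp f f.injective

/-- The action of the hyperoctahedral group `W(B_m)` on `ℝⁿ` by signed permutations of the basis
vectors indexed by an `m`-element set of indices. -/
noncomputable def typeBHom :
    (Multiplicative (Fin m → ZMod 2) ⋊[permAction m] Equiv.Perm (Fin m)) →*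
      (EucB n ≃ₗ[ℝ] EucB n) :=
  SemidirectProduct.lift (reflHom (orthonormal_eB_comp f).2)
    ((permHom n).comp (Equiv.Perm.viaEmbeddingHom f)) fun σ ↦ by
      refine MonoidHom.eq_of_eqOn_dense (closure_range_ofAdd_single 2) ?_
      rintro _ ⟨i, rfl⟩
      simp only [MonoidHom.comp_apply, MulEquiv.coe_toMonoidHom]
      rw [permAction_ofAdd_single, reflHom_ofAdd_single, reflHom_ofAdd_single,
        Function.comp_apply, Function.comp_apply, conj_permHom_sReflB_eB,
        Equiv.Perm.viaEmbeddingHom_apply, Equiv.Perm.viaEmbedding_apply]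

lemma typeBHom_apply_eB (x : Multiplicative (Fin m → ZMod 2) ⋊[permAction m] Equiv.Perm (Fin m))
    (i : Fin m) :
    typeBHom f x (eB n (f i)) = (-1 : ℤˣ) ^ toAdd x.left (x.right i) • eB n (f (x.right i)) := by
  change reflHom _ x.left (permHom n (Equiv.Perm.viaEmbeddingHom f x.right) (eB n (f i))) = _
  rw [permHom_apply_eB, Equiv.Perm.viaEmbeddingHom_apply, Equiv.Perm.viaEmbedding_apply]
  exact reflHom_apply_self (orthonormal_eB_comp f).2 x.left (x.right i)

lemma eq_one_of_typeBHom_apply_eB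
    {x : Multiplicative (Fin m → ZMod 2) ⋊[permAction m] Equiv.Perm (Fin m)}
    (hx : ∀ i, typeBHom f x (eB n (f i)) = eB n (f i)) : x = 1 := by
  have hv := orthonormal_eB_comp f
  simp only [typeBHom_apply_eB] at hx
  have hright : x.right = 1 := by
    ext1 i
    refine (index_eq_of_eq_or_eq_neg hv ?_).symm
    have hi := (hx i).symm
    rcases Int.units_eq_one_or ((-1 : ℤˣ) ^ toAdd x.left (x.right i)) with h | h
    · exact .inl (by rwa [h, one_smul] at hi)
    · exact .inr (by rwa [h, Units.neg_smul, one_smul] at hi)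
  have hleft : x.left = 1 := by
    refine eq_one_of_reflHom_apply_self hv.2 hv.ne_zero fun i ↦ ?_
    rw [reflHom_apply_self]
    simpa only [hright, Equiv.Perm.one_apply, Function.comp_apply] using hx i
  exact SemidirectProduct.ext hleft hright

lemma typeBHom_injective : Function.Injective (typeBHom f) :=
  (injective_iff_map_eq_one _).2 fun _ hx ↦ eq_one_of_typeBHom_apply_eB f fun _ ↦ by simp [hx]

lemma range_typeBHom_le :
    (typeBHom f).range ≤ Subgroup.closure (sReflB n '' typeBRoots (eB n ∘ f)) := by
  rw [typeBHom, range_semidirectProduct_lift, range_reflHom, MonoidHom.range_eq_map,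
    ← Equiv.Perm.closure_isSwap, MonoidHom.map_closure, ← Subgroup.closure_union]
  refine Subgroup.closure_mono (Set.union_subset ?_ ?_)
  · rintro _ ⟨i, rfl⟩
    exact ⟨_, .inl (mem_signedRange _ i), rfl⟩
  · rintro _ ⟨_, ⟨i, j, hij, rfl⟩, rfl⟩
    refine ⟨eB n (f i) - eB n (f j), ?_, ?_⟩
    · exact (mem_typeBRoots_iff (orthonormal_eB_comp f)).2 (.inl ⟨i, j, hij, .inr (.inl rfl)⟩)
    · rw [MonoidHom.comp_apply, viaEmbeddingHom_swap, permHom_swap (f.injective.ne hij)]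

lemma sReflB_eB_mem_range_typeBHom (i : Fin m) : sReflB n (eB n (f i)) ∈ (typeBHom f).range :=
  ⟨.inl (ofAdd (Pi.single i 1)), by
    rw [typeBHom, SemidirectProduct.lift_inl, reflHom_ofAdd_single, Function.comp_apply]⟩

lemma sReflB_sub_mem_range_typeBHom {i j : Fin m} (hij : i ≠ j) :
    sReflB n (eB n (f i) - eB n (f j)) ∈ (typeBHom f).range :=
  ⟨.inr (Equiv.swap i j), by
    rw [typeBHom, SemidirectProduct.lift_inr, MonoidHom.comp_apply, viaEmbeddingHom_swap,
      permHom_swap (f.injective.ne hij)]⟩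

lemma sReflB_add_mem_range_typeBHom {i j : Fin m} (hij : i ≠ j) :
    sReflB n (eB n (f i) + eB n (f j)) ∈ (typeBHom f).range := by
  have hinner : ⟪eB n (f j), eB n (f i)⟫ = 0 := (orthonormal_eB_comp f).2 hij.symm
  have hconj := conj_sReflB_sReflB (eB n (f j)) (eB n (f i) - eB n (f j))
  rw [map_sub, sReflB_self, sReflB_apply_of_inner_eq_zero hinner, sub_neg_eq_add] at hconj
  rw [← hconj]
  have hj := sReflB_eB_mem_range_typeBHom f j
  exact mul_mem (mul_mem hj (sReflB_sub_mem_range_typeBHom f hij)) (inv_mem hj)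

lemma range_typeBHom :
    (typeBHom f).range = Subgroup.closure (sReflB n '' typeBRoots (eB n ∘ f)) := by
  refine le_antisymm (range_typeBHom_le f) ?_
  rw [Subgroup.closure_le]
  rintro _ ⟨α, hα, rfl⟩
  rcases (mem_typeBRoots_iff (orthonormal_eB_comp f)).1 hα with
    ⟨i, j, hij, rfl | rfl | rfl | rfl⟩ | ⟨i, rfl | rfl⟩
  · exact sReflB_add_mem_range_typeBHom f hij
  · exact sReflB_sub_mem_range_typeBHom f hij
  · rw [neg_add_eq_sub]
    exact sReflB_sub_mem_range_typeBHom f hij.symm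
  · rw [← neg_add', sReflB_neg]
    exact sReflB_add_mem_range_typeBHom f hij
  · exact sReflB_eB_mem_range_typeBHom f i
  · rw [sReflB_neg]
    exact sReflB_eB_mem_range_typeBHom f i

end TypeBHom

end TypeB

section WeylGroup

variable {n : ℕ}

lemma sReflB_mem_signedRange {ι : Type*} {v : ι → EucB n} (hv : Orthonormal ℝ v) {a α : EucB n}
    (ha : a ∈ signedRange v) (hα : α ∈ typeBRoots v) : sReflB n α a ∈ signedRange v := by
  have hself {b : EucB n} (hb : b ∈ signedRange v) : sReflB n b a ∈ signedRange v := by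
    rcases eq_or_eq_neg_or_inner_eq_zero hv ha hb with rfl | rfl | hab
    · rw [sReflB_self]
      exact neg_mem_signedRange hb
    · rwa [← sReflB_neg, sReflB_self, neg_neg]
    · rwa [sReflB_apply_of_inner_eq_zero (by rwa [real_inner_comm])]
  have hswap {b c : EucB n} (hb : b ∈ signedRange v) (hc : c ∈ signedRange v) :
      sReflB n (b + c) b = -c := by
    rw [← sub_neg_eq_add, sReflB_sub]
    rw [norm_neg, norm_eq_sqrt_real_inner, norm_eq_sqrt_real_inner,
      inner_self_of_mem_signedRange hv hb, inner_self_of_mem_signedRange hv hc]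
  have hlong {b c : EucB n} (hb : b ∈ signedRange v) (hc : c ∈ signedRange v)
      (hab : a = b ∨ a = -b) : sReflB n (b + c) a ∈ signedRange v := by
    rcases hab with rfl | rfl
    · rw [hswap ha hc]
      exact neg_mem_signedRange hc
    · rwa [map_neg, hswap hb hc, neg_neg]
  obtain hα | ⟨b, hb, c, hc, -, rfl⟩ := hα
  · exact hself hα
  rcases or_assoc.2 (eq_or_eq_neg_or_inner_eq_zero hv ha hb) with hab | hab
  · exact hlong hb hc hab
  rcases or_assoc.2 (eq_or_eq_neg_or_inner_eq_zero hv ha hc) with hac | hac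
  · rw [add_comm]
    exact hlong hc hb hac
  · have hinner : ⟪b + c, a⟫ = 0 := by rw [real_inner_comm, inner_add_right, hab, hac, add_zero]
    rwa [sReflB_apply_of_inner_eq_zero hinner]

lemma mapsTo_signedRange_of_mem_WeylB {g : EucB n ≃ₗ[ℝ] EucB n} (hg : g ∈ WeylB n) :
    Set.MapsTo g (signedRange (eB n)) (signedRange (eB n)) := by
  have hinv (α : EucB n) : (sReflB n α)⁻¹ = sReflB n α :=
    inv_eq_of_mul_eq_one_left (by rw [← sq, sReflB_sq])
  have hgen (g : EucB n ≃ₗ[ℝ] EucB n) (hg : ∃ α ∈ DeltaB n, g = sReflB n α) :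
      Set.MapsTo g (signedRange (eB n)) (signedRange (eB n)) := by
    obtain ⟨α, hα, rfl⟩ := hg
    rw [DeltaB_eq_typeBRoots] at hα
    exact fun a ha ↦ sReflB_mem_signedRange (orthonormal_eB n) ha hα
  induction hg using Subgroup.closure_induction'' with
  | mem g hg => exact hgen g hg
  | inv_mem g hg =>
    obtain ⟨α, -, rfl⟩ := id hg
    exact hinv α ▸ hgen _ hg
  | one => exact Set.mapsTo_id _
  | mul g h _ _ hg hh => exact hg.comp hh

lemma isSignedInvolution_of_mem_WeylB {θ : EucB n ≃ₗ[ℝ] EucB n} (hθ : θ ∈ WeylB n)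
    (hθ2 : θ * θ = 1) : IsSignedInvolution (eB n) (θ : EucB n →ₗ[ℝ] EucB n) where
  involutive := LinearEquiv.congr_fun hθ2
  mapsTo := mapsTo_signedRange_of_mem_WeylB hθ

lemma image_sReflB_signedRange {ι : Type*} (v : ι → EucB n) :
    sReflB n '' signedRange v = Set.range fun i ↦ sReflB n (v i) := by
  refine subset_antisymm ?_ ?_
  · rintro _ ⟨_, ⟨i, rfl | rfl⟩, rfl⟩
    exacts [⟨i, rfl⟩, ⟨i, (sReflB_neg _).symm⟩]
  · rintro _ ⟨i, rfl⟩
    exact ⟨v i, mem_signedRange v i, rfl⟩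

lemma nonempty_closure_image_sReflB_mulEquiv {m : ℕ} {ι : Type*} [Finite ι] (f : Fin m ↪ Fin n)
    {β : ι → EucB n} (hβ0 : ∀ p, β p ≠ 0) (hβ : Pairwise fun p q ↦ ⟪β p, β q⟫ = 0)
    (hfβ : ∀ i p, ⟪eB n (f i), β p⟫ = 0) :
    Nonempty (Subgroup.closure (sReflB n '' (typeBRoots (eB n ∘ f) ∪ signedRange β)) ≃*
      (Multiplicative (Fin m → ZMod 2) ⋊[permAction m] Equiv.Perm (Fin m)) ×
        Multiplicative (ι → ZMod 2)) := by
  have := Fintype.ofFinite ι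
  rw [Set.image_union, image_sReflB_signedRange]
  refine nonempty_closure_union_mulEquiv_prod _ _ (typeBHom_injective f) (reflHom_injective hβ hβ0)
    (range_typeBHom f) (range_reflHom hβ) ?_ (Subgroup.disjoint_def.2 ?_)
  · rintro _ ⟨α, hα, rfl⟩ _ ⟨p, rfl⟩
    exact commute_sReflB (inner_eq_zero_of_mem_typeBRoots hα (hfβ · p))
  · rintro _ ⟨x, rfl⟩ ⟨c, hc⟩
    have hx : x = 1 := eq_one_of_typeBHom_apply_eB f fun i ↦ by
      rw [← hc, reflHom_apply_of_inner_eq_zero hβ fun p ↦ by rw [real_inner_comm, hfβ]]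
    rw [hx, map_one]

lemma nonempty_closure_reflections_fixed_roots_mulEquiv {η : EucB n →ₗ[ℝ] EucB n}
    (hη : IsSignedInvolution (eB n) η) {m k : ℕ}
    (hm : Nat.card {i : Fin n // η (eB n i) = eB n i} = m)
    (hk : Nat.card {i : Fin n // η (eB n i) ≠ eB n i ∧ η (eB n i) ≠ -eB n i} = 2 * k) :
    Nonempty (Subgroup.closure {g | ∃ α ∈ DeltaB n, η α = α ∧ g = sReflB n α} ≃*
      (Multiplicative (Fin m → ZMod 2) ⋊[permAction m] Equiv.Perm (Fin m)) ×
        Multiplicative (Fin k → ZMod 2)) := by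
  have hv := orthonormal_eB n
  let e := (Finite.equivFinOfCardEq hm).symm
  let f : Fin m ↪ Fin n := e.toEmbedding.trans (.subtype _)
  have hf_fixed (p : Fin m) : η (eB n (f p)) = eB n (f p) := (e p).2
  have hf (i : Fin n) : η (eB n i) = eB n i ↔ i ∈ Set.range f :=
    ⟨fun hi ↦ ⟨e.symm ⟨i, hi⟩, by simp [f]⟩, by rintro ⟨p, rfl⟩; exact hf_fixed p⟩
  have hcard : Nat.card {i // ⟪η (eB n i), eB n i⟫ = 0} = 2 * k := by
    rw [← hk]
    simp only [inner_eq_zero_iff_of_mem_signedRange hv (hη.mapsTo (mem_signedRange _ _))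
      (mem_signedRange _ _)]
  obtain ⟨β, hβ0, hβ, hβ_range⟩ := hη.exists_signedRange_eq hv hcard
  have hfβ (i : Fin m) (p : Fin k) : ⟪eB n (f i), β p⟫ = 0 := by
    obtain ⟨a, ha, hηa, hβp⟩ := hβ_range.subset (mem_signedRange β p)
    rw [hβp]
    exact hη.inner_add_map_eq_zero hv (mem_signedRange _ _) ha (hf_fixed i) hηa
  have hset : {g | ∃ α ∈ DeltaB n, η α = α ∧ g = sReflB n α} =
      sReflB n '' (typeBRoots (eB n ∘ f) ∪ signedRange β) := by
    rw [hβ_range, ← hη.setOf_mem_typeBRoots_map_eq_self hv f hf, ← DeltaB_eq_typeBRoots]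
    ext g
    simp only [Set.mem_ofPred_eq, Set.mem_image, and_assoc, eq_comm]
  rw [hset]
  exact nonempty_closure_image_sReflB_mulEquiv f hβ0 hβ hfβ

end WeylGroup

/-- Let `θ ∈ W(Bₙ)` be an involution, with `n_s` indices `i` such that `θ eᵢ = eᵢ`,
`n_r` indices with `θ eᵢ = −eᵢ`, and `2k` indices with `θ eᵢ ≠ ±eᵢ`.  Then the subgroup
of `W` generated by the reflections in the imaginary roots (`θα = α`) is isomorphic to
`W(B_{n_s}) × W(A₁)^k`, and the subgroup generated by the reflections in the real roots
(`θα = −α`) is isomorphic to `W(B_{n_r}) × W(A₁)^k`. -/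
theorem imaginary_real_weyl_subgroups (n : ℕ) (hn : 0 < n)
    (θ : EucB n ≃ₗ[ℝ] EucB n) (hθW : θ ∈ WeylB n) (hθ2 : θ * θ = 1)
    (ns nr k : ℕ)
    (hns : ns = Nat.card {i : Fin n // θ (eB n i) = eB n i})
    (hnr : nr = Nat.card {i : Fin n // θ (eB n i) = -eB n i})
    (hk : Nat.card {i : Fin n // θ (eB n i) ≠ eB n i ∧ θ (eB n i) ≠ -eB n i} = 2 * k) :
    Nonempty
      ((Subgroup.closure {g : EucB n ≃ₗ[ℝ] EucB n |
          ∃ α ∈ DeltaB n, θ α = α ∧ g = sReflB n α}) ≃*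
        (Multiplicative (Fin ns → ZMod 2) ⋊[permAction ns] Equiv.Perm (Fin ns)) ×
          Multiplicative (Fin k → ZMod 2)) ∧
    Nonempty
      ((Subgroup.closure {g : EucB n ≃ₗ[ℝ] EucB n |
          ∃ α ∈ DeltaB n, θ α = -α ∧ g = sReflB n α}) ≃*
        (Multiplicative (Fin nr → ZMod 2) ⋊[permAction nr] Equiv.Perm (Fin nr)) ×
          Multiplicative (Fin k → ZMod 2)) := by
  have hθ := isSignedInvolution_of_mem_WeylB hθW hθ2
  have hneg {x y : EucB n} : (-(θ : EucB n →ₗ[ℝ] EucB n)) x = y ↔ θ x = -y := by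
    simp [neg_eq_iff_eq_neg]
  constructor
  · exact nonempty_closure_reflections_fixed_roots_mulEquiv hθ hns.symm hk
  · have hreal : {g | ∃ α ∈ DeltaB n, θ α = -α ∧ g = sReflB n α} =
        {g | ∃ α ∈ DeltaB n, (-(θ : EucB n →ₗ[ℝ] EucB n)) α = α ∧ g = sReflB n α} := by
      simp only [hneg]
    rw [hreal]
    exact nonempty_closure_reflections_fixed_roots_mulEquiv hθ.neg
      (by simpa only [hneg] using hnr.symm)
      (by simpa only [hneg, ne_eq, neg_neg, and_comm] using hk)
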